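/- Let the stochastic kernel P(dx′|x,a) on X given X×A be weakly continuous and the stochastic kernel Q(dy|a,x) on Y given A×X be continuous in total variation. Then the stochastic kernel R′(dy|z,a) on Y given P(X)×A, defined by R′(C|z,a) = ∫_X ∫_X Q(C|a,x′) P(dx′|x,a) z(dx), is continuous in total variation: whenever z⁽ⁿ⁾ → z weakly in P(X) and a⁽ⁿ⁾ → a in A, sup_{C Borel in Y} |R′(C|z⁽ⁿ⁾,a⁽ⁿ⁾) − R′(C|z,a)| → 0. -/

import Mathlib

open MeasureTheory Filter Topology
open scoped ENNReal NNReal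

/-- The kernel `R'(C|z,a) = ∫_X ∫_X Q(C|a,x') P(dx'|x,a) z(dx)` of formula (3.5). -/
noncomputable def Rprime {X Y A : Type*} [MeasurableSpace X] [MeasurableSpace Y]
    (P : X × A → ProbabilityMeasure X) (Q : A × X → ProbabilityMeasure Y)
    (z : ProbabilityMeasure X) (a : A) (C : Set Y) : ℝ≥0∞ :=
  ∫⁻ x, (∫⁻ x', ((Q (a, x') : Measure Y) C) ∂((P (x, a) : Measure X))) ∂(z : Measure X)

/-!
On a separable metric space, a bounded Lipschitz function with values in a Banach space has an
integral that is Lipschitz in the measure for the Lévy–Prokhorov distance: by duality this is a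
statement about real functions, where the layer-cake formula applies. Every bounded continuous
function `Φ : T → E` is the composition of `T → Φ(T)` with the `1`-Lipschitz inclusion
`Φ(T) → E`, so pushing measures forward to `Φ(T)` shows that `μ ↦ ∫ Φ dμ` is weakly continuous.

Total variation is the supremum distance between the vectors `(μ C)_C` of `ℓ^∞` indexed by the
measurable sets `C`. Hence continuity of `Q` in total variation makes `Φ = Q(· | a, x)` such a
function, and `R'(· | z, a)` is its integral against the law `δ_a ⊗ ∫ P(· | x, a) z(dx)`, which
depends weakly continuously on `(z, a)`.
-/

open scoped BoundedContinuousFunction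
open ProbabilityTheory

section LevyProkhorov

variable {Ω : Type*} [PseudoMetricSpace Ω]

lemma thickening_superlevel_subset_of_lipschitzWith {K : ℝ≥0} {f : Ω → ℝ} (hf : LipschitzWith K f)
    (ε t : ℝ) : Metric.thickening ε {x | t ≤ f x} ⊆ {x | t ≤ f x + K * ε} := by
  intro x hx
  obtain ⟨y, hy, hxy⟩ := Metric.mem_thickening_iff.1 hx
  calc t ≤ f y := hy
    _ ≤ f x + K * dist y x := hf.le_add_mul y x
    _ ≤ f x + K * ε := by rw [dist_comm]; gcongr

variable [MeasurableSpace Ω] [OpensMeasurableSpace Ω] {μ ν : Measure Ω}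
    [IsProbabilityMeasure μ] [IsProbabilityMeasure ν] {ε : ℝ} {K : ℝ≥0} {f : Ω →ᵇ ℝ}

lemma setIntegral_measureReal_thickening_superlevel_le (hε : 0 ≤ ε) (hf : LipschitzWith K f)
    (hf0 : ∀ x, 0 ≤ f x) :
    ∫ t in Set.Ioc 0 ‖f‖, ν.real (Metric.thickening ε {x | t ≤ f x}) ≤ ∫ x, f x ∂ν + K * ε := by
  set g := f + BoundedContinuousFunction.const Ω (K * ε) with hg
  have hfg (x : Ω) : f x ≤ g x := le_add_of_nonneg_right (mul_nonneg K.2 hε)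
  have hg0 (x : Ω) : 0 ≤ g x := (hf0 x).trans (hfg x)
  have norm_le : ‖f‖ ≤ ‖g‖ := (f.norm_le (norm_nonneg g)).2 fun x =>
    (Real.norm_of_nonneg (hf0 x)).trans_le ((hfg x).trans (g.apply_le_norm x))
  have integrableOn_of_antitone {s : ℝ → Set Ω} (hs : Antitone s) (r : ℝ) :
      IntegrableOn (fun t => ν.real (s t)) (Set.Ioc 0 r) :=
    (Antitone.intervalIntegrable fun _ _ hst => measureReal_mono (hs hst)).1
  have antitone_superlevel (h : Ω → ℝ) : Antitone fun t => {x | t ≤ h x} :=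
    fun _ _ hst _ hx => hst.trans hx
  calc ∫ t in Set.Ioc 0 ‖f‖, ν.real (Metric.thickening ε {x | t ≤ f x})
    _ ≤ ∫ t in Set.Ioc 0 ‖f‖, ν.real {x | t ≤ g x} :=
        setIntegral_mono
          (integrableOn_of_antitone (fun _ _ hst =>
            Metric.thickening_subset_of_subset ε (antitone_superlevel f hst)) _)
          (integrableOn_of_antitone (antitone_superlevel g) _)
          fun t => measureReal_mono (thickening_superlevel_subset_of_lipschitzWith hf ε t)
    _ ≤ ∫ t in Set.Ioc 0 ‖g‖, ν.real {x | t ≤ g x} :=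
        setIntegral_mono_set (integrableOn_of_antitone (antitone_superlevel g) _)
          (.of_forall fun _ => measureReal_nonneg)
          (Set.Ioc_subset_Ioc_right norm_le).eventuallyLE
    _ = ∫ x, g x ∂ν := (g.integral_eq_integral_meas_le ν (.of_forall hg0)).symm
    _ = ∫ x, f x ∂ν + K * ε := by
        simp only [hg, f.integral_add_const, probReal_univ, one_smul]

lemma integral_sub_integral_le_of_levyProkhorovEDist_lt (hε : 0 < ε)
    (hμν : levyProkhorovEDist μ ν < ENNReal.ofReal ε) (hf : LipschitzWith K f) :
    ∫ x, f x ∂μ - ∫ x, f x ∂ν ≤ ε * (K + 2 * ‖f‖) := by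
  set g := f + BoundedContinuousFunction.const Ω ‖f‖ with hg
  have hg0 (x : Ω) : 0 ≤ g x := neg_le_iff_add_nonneg.1 (f.neg_norm_le_apply x)
  have norm_le : ‖g‖ ≤ 2 * ‖f‖ := by
    calc ‖g‖ ≤ ‖f‖ + ‖BoundedContinuousFunction.const Ω ‖f‖‖ := norm_add_le _ _
      _ ≤ ‖f‖ + ‖f‖ := by
        gcongr
        exact (BoundedContinuousFunction.norm_const_le _).trans_eq (norm_norm f)
      _ = 2 * ‖f‖ := (two_mul _).symm
  have lipschitz : LipschitzWith K g := fun x y => by simpa [hg] using hf x y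
  have key : ∫ x, g x ∂μ ≤ ∫ x, g x ∂ν + K * ε + ε * ‖g‖ :=
    (g.integral_le_of_levyProkhorovEDist_lt μ ν hε hμν (.of_forall hg0)).trans <| by
      gcongr
      exact setIntegral_measureReal_thickening_superlevel_le hε.le lipschitz hg0
  simp only [hg, f.integral_add_const, probReal_univ, one_smul] at key
  linarith [mul_le_mul_of_nonneg_left norm_le hε.le]

lemma abs_integral_sub_integral_le_levyProkhorovDist (hf : LipschitzWith K f) :
    |∫ x, f x ∂μ - ∫ x, f x ∂ν| ≤ levyProkhorovDist μ ν * (K + 2 * ‖f‖) := by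
  have le_of_lt {μ ν : Measure Ω} [IsProbabilityMeasure μ] [IsProbabilityMeasure ν] :
      ∫ x, f x ∂μ - ∫ x, f x ∂ν ≤ levyProkhorovDist μ ν * (K + 2 * ‖f‖) := by
    refine ge_of_tendsto (((continuous_mul_const (K + 2 * ‖f‖)).tendsto _).mono_left
      (nhdsWithin_le_nhds (s := Set.Ioi (levyProkhorovDist μ ν)))) ?_
    filter_upwards [self_mem_nhdsWithin] with ε hε
    exact integral_sub_integral_le_of_levyProkhorovEDist_lt
      (ENNReal.toReal_nonneg.trans_lt hε)
      ((ENNReal.lt_ofReal_iff_toReal_lt (levyProkhorovEDist_ne_top μ ν)).2 hε) hf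
  refine abs_sub_le_iff.2 ⟨le_of_lt, ?_⟩
  rw [levyProkhorovDist_comm]
  exact le_of_lt

end LevyProkhorov

section BochnerIntegral

variable {E : Type*} [NormedAddCommGroup E]

lemma integrable_boundedContinuousFunction {T : Type*} [TopologicalSpace T]
    [SecondCountableTopology T] [MeasurableSpace T] [OpensMeasurableSpace T] (μ : Measure T)
    [IsFiniteMeasure μ] (f : T →ᵇ E) : Integrable f μ :=
  .of_bound f.continuous.aestronglyMeasurable ‖f‖ (.of_forall f.norm_coe_le_norm)

variable [NormedSpace ℝ E] [CompleteSpace E]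

lemma norm_integral_sub_integral_le_levyProkhorovDist {Ω : Type*} [PseudoMetricSpace Ω]
    [SecondCountableTopology Ω] [MeasurableSpace Ω] [OpensMeasurableSpace Ω] (μ ν : Measure Ω)
    [IsProbabilityMeasure μ] [IsProbabilityMeasure ν] {K : ℝ≥0} {f : Ω →ᵇ E}
    (hf : LipschitzWith K f) :
    ‖∫ x, f x ∂μ - ∫ x, f x ∂ν‖ ≤ levyProkhorovDist μ ν * (K + 2 * ‖f‖) := by
  have hdist : 0 ≤ levyProkhorovDist μ ν := ENNReal.toReal_nonneg
  refine NormedSpace.norm_le_dual_bound ℝ _ (by positivity) fun φ => ?_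
  let g : Ω →ᵇ ℝ := φ.compLeftContinuousBounded Ω f
  have lipschitz : LipschitzWith (‖φ‖₊ * K) g := φ.lipschitz.comp hf
  have norm_le : ‖g‖ ≤ ‖φ‖ * ‖f‖ := (g.norm_le (by positivity)).2 fun x =>
    φ.le_opNorm_of_le (f.norm_coe_le_norm x)
  have integral_g (ρ : Measure Ω) [IsProbabilityMeasure ρ] : φ (∫ x, f x ∂ρ) = ∫ x, g x ∂ρ :=
    (φ.integral_comp_comm (integrable_boundedContinuousFunction ρ f)).symm
  calc ‖φ (∫ x, f x ∂μ - ∫ x, f x ∂ν)‖ = |∫ x, g x ∂μ - ∫ x, g x ∂ν| := by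
        rw [map_sub, integral_g, integral_g, Real.norm_eq_abs]
    _ ≤ levyProkhorovDist μ ν * (‖φ‖ * K + 2 * ‖g‖) :=
        abs_integral_sub_integral_le_levyProkhorovDist lipschitz
    _ ≤ levyProkhorovDist μ ν * (‖φ‖ * K + 2 * (‖φ‖ * ‖f‖)) := by gcongr
    _ = levyProkhorovDist μ ν * (K + 2 * ‖f‖) * ‖φ‖ := by ring

theorem continuous_integral_of_lipschitzWith {Ω : Type*} [PseudoMetricSpace Ω]
    [SecondCountableTopology Ω] [MeasurableSpace Ω] [OpensMeasurableSpace Ω] {K : ℝ≥0} {f : Ω →ᵇ E}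
    (hf : LipschitzWith K f) :
    Continuous fun μ : ProbabilityMeasure Ω => ∫ x, f x ∂(μ : Measure Ω) := by
  have lipschitz : LipschitzWith (K + 2 * ‖f‖₊)
      fun μ : LevyProkhorov (ProbabilityMeasure Ω) => ∫ x, f x ∂(μ.toMeasure : Measure Ω) :=
    .of_dist_le_mul fun μ ν => by
      rw [dist_eq_norm]
      exact (norm_integral_sub_integral_le_levyProkhorovDist _ _ hf).trans_eq (mul_comm _ _)
  exact lipschitz.continuous.comp LevyProkhorov.continuous_ofMeasure_probabilityMeasure

theorem continuous_integral_boundedContinuousFunction {T : Type*} [TopologicalSpace T]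
    [SecondCountableTopology T] [MeasurableSpace T] [OpensMeasurableSpace T] (f : T →ᵇ E) :
    Continuous fun μ : ProbabilityMeasure T => ∫ x, f x ∂(μ : Measure T) := by
  borelize E
  let S := Set.range f
  have : TopologicalSpace.SeparableSpace S :=
    Set.rangeFactorization_surjective.denseRange.separableSpace f.continuous.rangeFactorization
  have : SecondCountableTopology S := UniformSpace.secondCountable_of_separable S
  let inclusion : S →ᵇ E := .ofNormedAddCommGroup Subtype.val continuous_subtype_val ‖f‖ (by
    rintro ⟨_, x, rfl⟩
    exact f.norm_coe_le_norm x)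
  have integral_map (μ : ProbabilityMeasure T) :
      ∫ y, inclusion y ∂(μ.map f.continuous.rangeFactorization.aemeasurable : Measure S)
        = ∫ x, f x ∂(μ : Measure T) :=
    MeasureTheory.integral_map f.continuous.rangeFactorization.aemeasurable
      inclusion.continuous.aestronglyMeasurable
  simp only [← integral_map]
  exact (continuous_integral_of_lipschitzWith (LipschitzWith.subtype_val S)).comp
    (ProbabilityMeasure.continuous_map f.continuous.rangeFactorization)

end BochnerIntegral

section Mixture

variable {S T Y : Type*} [MeasurableSpace S] [MeasurableSpace T] [MeasurableSpace Y]

/-- The law `∫ κ(· | s) μ(ds)` of a point drawn from the stochastic kernel `κ` when its parameter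
has law `μ`: the monadic bind of measures, bundled as a probability measure. -/
noncomputable def mixture (κ : S → ProbabilityMeasure T)
    (hκ : Measurable fun s => (κ s : Measure T)) (μ : ProbabilityMeasure S) :
    ProbabilityMeasure T :=
  ⟨(μ : Measure S).bind fun s => (κ s : Measure T),
    isProbabilityMeasure_bind hκ.aemeasurable (.of_forall fun s => (κ s).2)⟩

lemma integral_mixture {E : Type*} [NormedAddCommGroup E] [NormedSpace ℝ E]
    {κ : S → ProbabilityMeasure T} (hκ : Measurable fun s => (κ s : Measure T))
    (μ : ProbabilityMeasure S) {f : T → E} (hf : Integrable f (mixture κ hκ μ : Measure T)) :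
    ∫ t, f t ∂(mixture κ hκ μ : Measure T) = ∫ s, ∫ t, f t ∂(κ s : Measure T) ∂(μ : Measure S) := by
  let η : Kernel S T := ⟨fun s => κ s, hκ⟩
  have mixture_eq : (mixture κ hκ μ : Measure T) = (η ∘ₖ Kernel.const Unit (μ : Measure S)) () :=
    Measure.comp_eq_comp_const_apply (κ := η) (μ := (μ : Measure S))
  rw [mixture_eq] at hf ⊢
  exact Kernel.integral_comp hf

theorem continuous_mixture [TopologicalSpace S] [OpensMeasurableSpace S] [TopologicalSpace T]
    [OpensMeasurableSpace T] {κ : S → ProbabilityMeasure T}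
    (hκ : Measurable fun s => (κ s : Measure T)) (hκc : Continuous κ) :
    Continuous (mixture κ hκ) := by
  refine ProbabilityMeasure.continuous_iff_forall_continuous_integral.2 fun f => ?_
  let integralAgainst : S →ᵇ ℝ := .ofNormedAddCommGroup (fun s => ∫ t, f t ∂(κ s : Measure T))
    ((ProbabilityMeasure.continuous_integral_boundedContinuousFunction f).comp hκc) ‖f‖
    fun s => f.norm_integral_le_norm _
  simp only [integral_mixture hκ _ (f.integrable _)]
  exact ProbabilityMeasure.continuous_integral_boundedContinuousFunction integralAgainst

/-- The total variation embedding: the vector `(μ C)_C`, indexed by the measurable sets, in `ℓ^∞`.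
The distance between two images is `sup_C |μ C - ν C|`, so continuity of `toLpInfty ∘ κ` is
continuity in total variation of the kernel `κ`. -/
noncomputable def toLpInfty (μ : ProbabilityMeasure Y) :
    lp (fun _ : {C : Set Y // MeasurableSet C} => ℝ) ∞ :=
  ⟨fun C => μ C.1, memℓp_infty ⟨1, by
    rintro _ ⟨C, rfl⟩
    simp [μ.apply_le_one]⟩⟩

lemma norm_toLpInfty_le (μ : ProbabilityMeasure Y) : ‖toLpInfty μ‖ ≤ 1 :=
  lp.norm_le_of_forall_le zero_le_one fun C => by
    simp [toLpInfty, μ.apply_le_one]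

lemma tendsto_toLpInfty_iff {ι : Type*} {l : Filter ι} {μs : ι → ProbabilityMeasure Y}
    {μ : ProbabilityMeasure Y} :
    Tendsto (fun i => toLpInfty (μs i)) l (𝓝 (toLpInfty μ)) ↔
      Tendsto (fun i => ⨆ C : {C : Set Y // MeasurableSet C}, |(μs i C.1 : ℝ) - (μ C.1 : ℝ)|) l
        (𝓝 0) := by
  rw [tendsto_iff_dist_tendsto_zero]
  simp only [dist_eq_norm, lp.norm_eq_ciSup]
  rfl

lemma measurable_of_continuous_toLpInfty [TopologicalSpace T] [OpensMeasurableSpace T]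
    {κ : T → ProbabilityMeasure Y} (hκ : Continuous fun t => toLpInfty (κ t)) :
    Measurable fun t => (κ t : Measure Y) := by
  refine Measure.measurable_of_measurable_coe _ fun C hC => ?_
  have continuous_apply : Continuous fun t => (κ t C : ℝ) :=
    (lp.evalCLM ℝ _ ∞ (⟨C, hC⟩ : {C : Set Y // MeasurableSet C})).continuous.comp hκ
  simpa only [ENNReal.ofReal_coe_nnreal, ProbabilityMeasure.ennreal_coeFn_eq_coeFn_toMeasure]
    using continuous_apply.measurable.ennreal_ofReal

lemma toLpInfty_mixture {κ : T → ProbabilityMeasure Y}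
    (hκ : Measurable fun t => (κ t : Measure Y)) (μ : ProbabilityMeasure T)
    (h_integrable : Integrable (fun t => toLpInfty (κ t)) μ) :
    toLpInfty (mixture κ hκ μ) = ∫ t, toLpInfty (κ t) ∂(μ : Measure T) := by
  ext C
  have measurable_apply : Measurable fun t => (κ t : Measure Y) C.1 :=
    (Measure.measurable_coe C.2).comp hκ
  calc (mixture κ hκ μ C.1 : ℝ) = (∫⁻ t, (κ t : Measure Y) C.1 ∂(μ : Measure T)).toReal :=
        congrArg ENNReal.toReal (Measure.bind_apply C.2 hκ.aemeasurable)
    _ = ∫ t, (κ t C.1 : ℝ) ∂(μ : Measure T) :=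
        (integral_toReal measurable_apply.aemeasurable
          (.of_forall fun _ => measure_lt_top _ _)).symm
    _ = (∫ t, toLpInfty (κ t) ∂(μ : Measure T)) C :=
        (lp.evalCLM ℝ _ ∞ C).integral_comp_comm h_integrable

theorem continuous_toLpInfty_mixture [TopologicalSpace T] [SecondCountableTopology T]
    [OpensMeasurableSpace T] {κ : T → ProbabilityMeasure Y}
    (hκ : Continuous fun t => toLpInfty (κ t)) :
    Continuous fun μ => toLpInfty (mixture κ (measurable_of_continuous_toLpInfty hκ) μ) := by
  let f : T →ᵇ lp (fun _ : {C : Set Y // MeasurableSet C} => ℝ) ∞ :=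
    .ofNormedAddCommGroup (fun t => toLpInfty (κ t)) hκ 1 fun t => norm_toLpInfty_le (κ t)
  exact (continuous_integral_boundedContinuousFunction f).congr fun μ =>
    (toLpInfty_mixture _ μ (integrable_boundedContinuousFunction (μ : Measure T) f)).symm

end Mixture

section Rprime

variable {X Y A : Type*} [MeasurableSpace X] [MeasurableSpace Y] [MeasurableSpace A]
  {P : X × A → ProbabilityMeasure X} {Q : A × X → ProbabilityMeasure Y}

/-- The joint law `δ_a ⊗ ∫ P(· | x, a) z(dx)` of the action and the next state, when the action is
`a` and the current state has law `z`. -/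
noncomputable def actionNextState (P : X × A → ProbabilityMeasure X)
    (hP : Measurable fun p => (P p : Measure X)) (z : ProbabilityMeasure X) (a : A) :
    ProbabilityMeasure (A × X) :=
  (diracProba a).prod (mixture P hP (z.prod (diracProba a)))

lemma continuous_actionNextState [TopologicalSpace X] [TopologicalSpace.PseudoMetrizableSpace X]
    [SecondCountableTopology X] [OpensMeasurableSpace X] [TopologicalSpace A]
    [TopologicalSpace.PseudoMetrizableSpace A] [SecondCountableTopology A] [OpensMeasurableSpace A]
    (hP : Measurable fun p => (P p : Measure X)) (hPc : Continuous P) :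
    Continuous fun p : ProbabilityMeasure X × A => actionNextState P hP p.1 p.2 := by
  have continuous_dirac : Continuous fun p : ProbabilityMeasure X × A => diracProba p.2 :=
    continuous_diracProba.comp continuous_snd
  have continuous_stateAction :
      Continuous fun p : ProbabilityMeasure X × A => p.1.prod (diracProba p.2) :=
    ProbabilityMeasure.continuous_prod.comp (continuous_fst.prodMk continuous_dirac)
  exact ProbabilityMeasure.continuous_prod.comp
    (continuous_dirac.prodMk ((continuous_mixture hP hPc).comp continuous_stateAction))

lemma Rprime_eq_mixture_actionNextState (hP : Measurable fun p => (P p : Measure X))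
    (hQ : Measurable fun p => (Q p : Measure Y)) (z : ProbabilityMeasure X) (a : A) {C : Set Y}
    (hC : MeasurableSet C) :
    Rprime P Q z a C = (mixture Q hQ (actionNextState P hP z a) : Measure Y) C := by
  have measurable_Q : Measurable fun p => (Q p : Measure Y) C := (Measure.measurable_coe hC).comp hQ
  have measurable_Qa : Measurable fun x => (Q (a, x) : Measure Y) C :=
    measurable_Q.comp measurable_prodMk_left
  have measurable_PQ : Measurable fun p => ∫⁻ x', (Q (a, x') : Measure Y) C ∂(P p : Measure X) :=
    (Measure.measurable_lintegral measurable_Qa).comp hP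
  symm
  calc (mixture Q hQ (actionNextState P hP z a) : Measure Y) C
    _ = ∫⁻ p, (Q p : Measure Y) C ∂(actionNextState P hP z a : Measure (A × X)) :=
        Measure.bind_apply hC hQ.aemeasurable
    _ = ∫⁻ x', (Q (a, x') : Measure Y) C
          ∂(mixture P hP (z.prod (diracProba a)) : Measure X) := by
        refine (lintegral_prod _ measurable_Q.aemeasurable).trans ?_
        exact lintegral_dirac' a measurable_Q.lintegral_prod_right'
    _ = ∫⁻ p, ∫⁻ x', (Q (a, x') : Measure Y) C ∂(P p : Measure X)
          ∂(z.prod (diracProba a) : Measure (X × A)) :=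
        Measure.lintegral_bind hP.aemeasurable measurable_Qa.aemeasurable
    _ = Rprime P Q z a C := by
        refine (lintegral_prod _ measurable_PQ.aemeasurable).trans ?_
        exact lintegral_congr fun x =>
          lintegral_dirac' a (measurable_PQ.comp measurable_prodMk_left)

theorem Rprime_totalVariation_continuous_general [TopologicalSpace X]
    [TopologicalSpace.PseudoMetrizableSpace X] [SecondCountableTopology X] [OpensMeasurableSpace X]
    [TopologicalSpace A] [TopologicalSpace.PseudoMetrizableSpace A] [SecondCountableTopology A]
    [OpensMeasurableSpace A] (hPmeas : Measurable fun p => (P p : Measure X))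
    (hPcont : Continuous P)
    (hQtv : ∀ v, Tendsto (fun u => ⨆ C : {C : Set Y // MeasurableSet C},
      |(Q u C.1 : ℝ) - (Q v C.1 : ℝ)|) (𝓝 v) (𝓝 0))
    {ι : Type*} {l : Filter ι} {zs : ι → ProbabilityMeasure X} {z : ProbabilityMeasure X}
    {as : ι → A} {a : A} (hz : Tendsto zs l (𝓝 z)) (ha : Tendsto as l (𝓝 a)) :
    Tendsto (fun i => ⨆ C : {C : Set Y // MeasurableSet C},
      |(Rprime P Q (zs i) (as i) C.1).toReal - (Rprime P Q z a C.1).toReal|) l (𝓝 0) := by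
  have continuous_Q : Continuous fun u => toLpInfty (Q u) :=
    continuous_iff_continuousAt.2 fun v => tendsto_toLpInfty_iff.2 (hQtv v)
  have tendsto_law :=
    ((continuous_actionNextState hPmeas hPcont).tendsto (z, a)).comp (hz.prodMk_nhds ha)
  have hQmeas := measurable_of_continuous_toLpInfty continuous_Q
  have tendsto_mixture :
      Tendsto (fun i => toLpInfty (mixture Q hQmeas (actionNextState P hPmeas (zs i) (as i)))) l
        (𝓝 (toLpInfty (mixture Q hQmeas (actionNextState P hPmeas z a)))) :=
    ((continuous_toLpInfty_mixture continuous_Q).tendsto _).comp tendsto_law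
  refine (tendsto_toLpInfty_iff.1 tendsto_mixture).congr fun i => iSup_congr fun C => ?_
  rw [Rprime_eq_mixture_actionNextState hPmeas hQmeas _ _ C.2,
    Rprime_eq_mixture_actionNextState hPmeas hQmeas _ _ C.2]
  rfl

end Rprime

/-- **Corollary (total variation continuity of `R'`).**
If the transition kernel `P` on `X` given `X×A` is weakly continuous and the observation
kernel `Q` on `Y` given `A×X` is continuous in total variation, then the kernel
`R'(dy|z,a)` on `Y` given `P(X)×A` is continuous in total variation: whenever
`z⁽ⁿ⁾ → z` weakly and `a⁽ⁿ⁾ → a`,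
`sup_{C Borel} |R'(C|z⁽ⁿ⁾,a⁽ⁿ⁾) − R'(C|z,a)| → 0`. -/
theorem Rprime_totalVariation_continuous {X Y A : Type*}
    [MetricSpace X] [SecondCountableTopology X] [MeasurableSpace X] [BorelSpace X]
    [MetricSpace Y] [SecondCountableTopology Y] [MeasurableSpace Y] [BorelSpace Y]
    [MetricSpace A] [SecondCountableTopology A] [MeasurableSpace A] [BorelSpace A]
    (P : X × A → ProbabilityMeasure X) (Q : A × X → ProbabilityMeasure Y)
    (hPmeas : Measurable fun p => (P p : Measure X))
    (hQmeas : Measurable fun p => (Q p : Measure Y))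
    (hPcont : Continuous P)
    (hQtv : ∀ (u : ℕ → A × X) (v : A × X), Tendsto u atTop (𝓝 v) →
      Tendsto (fun n => ⨆ C : {C : Set Y // MeasurableSet C},
        |((Q (u n)) C.1 : ℝ) - ((Q v) C.1 : ℝ)|) atTop (𝓝 0)) :
    ∀ (zs : ℕ → ProbabilityMeasure X) (z : ProbabilityMeasure X) (as : ℕ → A) (a : A),
      Tendsto zs atTop (𝓝 z) → Tendsto as atTop (𝓝 a) →
      Tendsto (fun n => ⨆ C : {C : Set Y // MeasurableSet C},
          |(Rprime P Q (zs n) (as n) C.1).toReal - (Rprime P Q z a C.1).toReal|)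
        atTop (𝓝 0) :=
  fun _ _ _ _ hz ha =>
    Rprime_totalVariation_continuous_general hPmeas hPcont
      (fun v => tendsto_of_seq_tendsto fun u hu => hQtv u v hu) hz ha
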